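/- Suppose b(0) = √λ̄. Suppose z : [p₀,0] → ℝ is C¹ with z(p₀) = 0, z′(p₀) = 1, p ↦ b(p)³z′(p) is differentiable on (p₀,0) with derivative μ̄·b·z, and λ̄^{3/2}·z′(0) = (g + σμ̄)·z(0). Suppose w : [p₀,0] → ℝ is C¹ with w(p₀) = w′(p₀) = 0 and p ↦ b(p)³w′(p) is differentiable on (p₀,0) with derivative μ̄·b·w + b·z. Then z(0)·(λ̄^{3/2}·w′(0) − (g + σμ̄)·w(0)) = ∫_{p₀}^0 b(p)·z(p)² dp. -/

import Mathlib

open Set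

/-!
By Lagrange's identity, `P (z w' - w z')` has derivative `z (P w')' - w (P z')'`; integrated over
`[a, b]` this is Green's identity. If `(P z')' = q z` and `(P w')' = q w + r z`, the terms in `q`
cancel and the integrand is `r z²`. The Dirichlet conditions at `a` remove the lower boundary term,
and the Robin condition `P z' = κ z` at `b` turns the upper one into `z (P w' - κ w)`.
-/

/-- The Wronskian `P (z w' - w z')` attached to the operator `z ↦ (P z')'`, whose derivative and
boundary values enter Lagrange's and Green's identities. The derivatives `z'` and `w'` are separate
arguments, so that they may be one-sided at the endpoints of an interval. -/
def weightedWronskian {X A : Type*} [Ring A] (P z z' w w' : X → A) (x : X) : A :=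
  z x * (P x * w' x) - w x * (P x * z' x)

theorem weightedWronskian_eq_zero {X A : Type*} [Ring A] {P z z' w w' : X → A} {x : X}
    (hz : z x = 0) (hw : w x = 0) : weightedWronskian P z z' w w' x = 0 := by
  simp [weightedWronskian, hz, hw]

theorem weightedWronskian_eq_of_robin {X A : Type*} [CommRing A] {P z z' w w' : X → A} {κ : A}
    {x : X} (hz : P x * z' x = κ * z x) :
    weightedWronskian P z z' w w' x = z x * (P x * w' x - κ * w x) := by
  rw [weightedWronskian, hz]
  ring

theorem hasDerivAt_weightedWronskian {𝕜 A : Type*} [NontriviallyNormedField 𝕜] [NormedCommRing A]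
    [NormedAlgebra 𝕜 A] {P z z' w w' : 𝕜 → A} {F G : A} {x : 𝕜}
    (hz : HasDerivAt z (z' x) x) (hw : HasDerivAt w (w' x) x)
    (hPz : HasDerivAt (fun s => P s * z' s) F x) (hPw : HasDerivAt (fun s => P s * w' s) G x) :
    HasDerivAt (weightedWronskian P z z' w w') (z x * G - w x * F) x :=
  ((hz.mul hPw).sub (hw.mul hPz)).congr_deriv (by ring)

/-- `z` solves the inhomogeneous equation `(P z')' = F` on `[a, b]`. The equation holds in the open
interval, while `z` and the flux `P z'` are continuous up to the endpoints, which gives meaning to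
boundary conditions; `P` itself need not be differentiable. -/
structure IsDivergenceFormSolution {A : Type*} [NormedRing A] [NormedAlgebra ℝ A]
    (P F z z' : ℝ → A) (a b : ℝ) : Prop where
  continuousOn : ContinuousOn z (Icc a b)
  continuousOn_flux : ContinuousOn (fun x => P x * z' x) (Icc a b)
  hasDerivAt : ∀ x ∈ Ioo a b, HasDerivAt z (z' x) x
  hasDerivAt_flux : ∀ x ∈ Ioo a b, HasDerivAt (fun s => P s * z' s) (F x) x

namespace IsDivergenceFormSolution

theorem of_hasDerivWithinAt {A : Type*} [NormedRing A] [NormedAlgebra ℝ A]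
    {P F z z' : ℝ → A} {a b : ℝ} (hP : ContinuousOn P (Icc a b)) (hz' : ContinuousOn z' (Icc a b))
    (hz : ∀ x ∈ Icc a b, HasDerivWithinAt z (z' x) (Icc a b) x)
    (hflux : ∀ x ∈ Ioo a b, HasDerivAt (fun s => P s * z' s) (F x) x) :
    IsDivergenceFormSolution P F z z' a b where
  continuousOn := HasDerivWithinAt.continuousOn hz
  continuousOn_flux := hP.mul hz'
  hasDerivAt x hx := (hz x (Ioo_subset_Icc_self hx)).hasDerivAt (Icc_mem_nhds hx.1 hx.2)
  hasDerivAt_flux := hflux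

variable {A : Type*} [NormedCommRing A] [NormedAlgebra ℝ A] {P F G z z' w w' : ℝ → A} {a b : ℝ}

theorem continuousOn_weightedWronskian (hz : IsDivergenceFormSolution P F z z' a b)
    (hw : IsDivergenceFormSolution P G w w' a b) :
    ContinuousOn (weightedWronskian P z z' w w') (Icc a b) :=
  (hz.continuousOn.mul hw.continuousOn_flux).sub (hw.continuousOn.mul hz.continuousOn_flux)

theorem integral_mul_sub_mul_eq_sub_weightedWronskian [CompleteSpace A]
    (hz : IsDivergenceFormSolution P F z z' a b) (hw : IsDivergenceFormSolution P G w w' a b)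
    (hab : a ≤ b)
    (hint : IntervalIntegrable (fun x => z x * G x - w x * F x) MeasureTheory.volume a b) :
    ∫ x in a..b, (z x * G x - w x * F x) =
      weightedWronskian P z z' w w' b - weightedWronskian P z z' w w' a :=
  intervalIntegral.integral_eq_sub_of_hasDerivAt_of_le hab (hz.continuousOn_weightedWronskian hw)
    (fun x hx => hasDerivAt_weightedWronskian (hz.hasDerivAt x hx) (hw.hasDerivAt x hx)
      (hz.hasDerivAt_flux x hx) (hw.hasDerivAt_flux x hx)) hint

end IsDivergenceFormSolution

theorem stmt_9_general {A : Type*} [NormedCommRing A] [NormedAlgebra ℝ A] [CompleteSpace A]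
    {P q r z z' w w' : ℝ → A} {κ : A} {a b : ℝ} (hab : a ≤ b)
    (hr : IntervalIntegrable r MeasureTheory.volume a b)
    (hz : IsDivergenceFormSolution P (fun x => q x * z x) z z' a b)
    (hw : IsDivergenceFormSolution P (fun x => q x * w x + r x * z x) w w' a b)
    (hza : z a = 0) (hwa : w a = 0) (hzb : P b * z' b = κ * z b) :
    z b * (P b * w' b - κ * w b) = ∫ x in a..b, r x * z x ^ 2 := by
  have integrand_eq (x : ℝ) :
      z x * (q x * w x + r x * z x) - w x * (q x * z x) = r x * z x ^ 2 := by ring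
  have hint : IntervalIntegrable (fun x => r x * z x ^ 2) MeasureTheory.volume a b :=
    hr.mul_continuousOn (uIcc_of_le hab ▸ hz.continuousOn.pow 2)
  calc z b * (P b * w' b - κ * w b)
      = weightedWronskian P z z' w w' b - weightedWronskian P z z' w w' a := by
        rw [weightedWronskian_eq_of_robin hzb, weightedWronskian_eq_zero hza hwa, sub_zero]
    _ = ∫ x in a..b, (z x * (q x * w x + r x * z x) - w x * (q x * z x)) :=
        (hz.integral_mul_sub_mul_eq_sub_weightedWronskian hw hab
          (by simpa only [integrand_eq] using hint)).symm
    _ = ∫ x in a..b, r x * z x ^ 2 := by simp only [integrand_eq]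

/-- Suppose `b(0) = √λ̄`, `z` solves `(b³z′)′ = μ̄ b z` with `z(p₀)=0, z′(p₀)=1`
and `λ̄^{3/2} z′(0) = (g+σμ̄) z(0)`, and `w` solves `(b³w′)′ = μ̄ b w + b z` with
`w(p₀) = w′(p₀) = 0`. Then
`z(0)·(λ̄^{3/2} w′(0) − (g+σμ̄) w(0)) = ∫_{p₀}^0 b(p) z(p)² dp`. -/
theorem stmt_9 (p₀ g σ lam μ : ℝ) (hp₀ : p₀ < 0) (hg : 0 < g) (hσ : 0 < σ)
    (hlam : 0 < lam) (hμ : 0 ≤ μ)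
    (b : ℝ → ℝ) (hb : ContinuousOn b (Set.Icc p₀ 0)) (hbpos : ∀ p ∈ Set.Icc p₀ 0, 0 < b p)
    (hb0 : b 0 = Real.sqrt lam)
    (z z' w w' : ℝ → ℝ)
    (hz : ∀ p ∈ Set.Icc p₀ 0, HasDerivWithinAt z (z' p) (Set.Icc p₀ 0) p)
    (hzc : ContinuousOn z' (Set.Icc p₀ 0))
    (hz0 : z p₀ = 0) (hz1 : z' p₀ = 1)
    (hzode : ∀ p ∈ Set.Ioo p₀ 0,
      HasDerivAt (fun s => b s ^ 3 * z' s) (μ * b p * z p) p)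
    (hzbc : Real.sqrt lam ^ 3 * z' 0 = (g + σ * μ) * z 0)
    (hw : ∀ p ∈ Set.Icc p₀ 0, HasDerivWithinAt w (w' p) (Set.Icc p₀ 0) p)
    (hwc : ContinuousOn w' (Set.Icc p₀ 0))
    (hw0 : w p₀ = 0) (hw1 : w' p₀ = 0)
    (hwode : ∀ p ∈ Set.Ioo p₀ 0,
      HasDerivAt (fun s => b s ^ 3 * w' s) (μ * b p * w p + b p * z p) p) :
    z 0 * (Real.sqrt lam ^ 3 * w' 0 - (g + σ * μ) * w 0)
      = ∫ p in p₀..0, b p * z p ^ 2 := by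
  have hP : ContinuousOn (fun s => b s ^ 3) (Icc p₀ 0) := hb.pow 3
  simpa only [hb0] using stmt_9_general hp₀.le (hb.intervalIntegrable_of_Icc hp₀.le)
    (.of_hasDerivWithinAt hP hzc hz hzode) (.of_hasDerivWithinAt hP hwc hw hwode) hz0 hw0
    (hb0 ▸ hzbc)
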